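/- Let A be a core synchronous transducer on X_n, synchronizing at level k, invertible, with every state a homeomorphism state, and minimal (no two distinct states are ω-equivalent). Let j ≥ k and let S ⊆ Q_A with |S| ≥ 2 be such that every two-element subset of S is a vertex of the graph of bad pairs G_j(A), and from every such vertex there is a directed path (possibly of length 0) in G_j(A) to a vertex lying on a circuit. Then the assignment w ↦ A_w, from nonempty words w over S to self-maps of X_n^ℕ, is injective; i.e. {A_q : q ∈ S} generates a free subsemigroup of rank |S| of the automaton semigroup generated by A. -/

import Mathlib

/-!
Equal maps `A_w = A_{w'}` have equal sections: after reading a finite word `Γ`, the words of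
states `w` and `w'` turn into words of states which again induce the same map, and `Γ` is sent to
the same output (`prepend_inj` with `wordMap_prepend`).  Because every `A_q` is surjective, a
common prefix of states can be cancelled (`wordMap_append_cancel`).

Let `{t, p} → {a, b}` be an edge of the graph of bad pairs, witnessed by `Γ` and a split of length
`l + 1`.  Since the bottom depends only on the top, reading `Γ` turns *any* word `t ⋯` into
`O a ⋯` and *any* word `p ⋯` into `O b ⋯`, with the same `O` of length `l + 1`.  Hence if `t ⋯` and
`p ⋯` have the same length and induce the same map, so do the shorter words `a ⋯` and `b ⋯`.  A
vertex leading to a circuit starts an infinite path, so this descent continues until the words have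
length at most `l + 1`.  Padding both on the right to length exactly `l + 1`, reading `Γ` must give
the same output, contradicting that the outputs force the distinct states `a` and `b`.  This is
`wordMap_ne_of_leadsToCircuit`; the letters after the first need not lie in `S`.

So words over `S` of equal length and distinct first letters induce distinct maps.  The general
case reduces to this one.  If `A_w = A_{w'}` and the first letters differ, compare `w w'` with
`w' w`.  If `A_v` is the identity for a nonempty `v`, compare `q v` with `v q` for a letter
`q ∈ S` other than the first letter of `v`.
-/

/-- A synchronous transducer with alphabet `X` and state set `Q`:
`step x q` is the state reached after reading letter `x` at state `q`, and
`out x q` is the letter written. -/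
structure Transducer (X : Type*) (Q : Type*) where
  step : X → Q → Q
  out : X → Q → X

namespace Transducer

variable {X Q R : Type*}

/-- The transition function extended to words (read left to right). -/
def stepW (T : Transducer X Q) : List X → Q → Q
  | [], q => q
  | x :: w, q => T.stepW w (T.step x q)

/-- The output function extended to words. -/
def outW (T : Transducer X Q) : List X → Q → List X
  | [], _ => []
  | x :: w, q => T.out x q :: T.outW w (T.step x q)

theorem stepW_append (T : Transducer X Q) (u v : List X) (q : Q) :
    T.stepW (u ++ v) q = T.stepW v (T.stepW u q) := by
  induction u generalizing q with
  | nil => rfl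
  | cons x u ih => simpa [stepW] using ih (T.step x q)

/-- `T` is synchronizing at level `k`: the state reached after reading any word of
length `k` is independent of the starting state. -/
def Synchronizing (T : Transducer X Q) (k : ℕ) : Prop :=
  ∀ Γ : List X, Γ.length = k → ∀ p q : Q, T.stepW Γ p = T.stepW Γ q

/-- A state is in the core of `T` if it is forced by some nonempty word. -/
def InCore (T : Transducer X Q) (q : Q) : Prop :=
  ∃ Γ : List X, Γ ≠ [] ∧ ∀ p : Q, T.stepW Γ p = q

/-- `T` is core if every state is forced. -/
def IsCore (T : Transducer X Q) : Prop := ∀ q : Q, T.InCore q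

/-- The map on one-sided infinite sequences induced by the state `q`. -/
def stateMap (T : Transducer X Q) (q : Q) (x : ℕ → X) : ℕ → X :=
  fun i => T.out (x i) (T.stepW ((List.range i).map x) q)

/-- Every state of `T` is a homeomorphism state. -/
def AllHomeo (T : Transducer X Q) : Prop := ∀ q : Q, Function.Bijective (T.stateMap q)

/-- `T` is invertible: every state acts as a bijection on single letters. -/
def Invertible (T : Transducer X Q) : Prop :=
  ∀ q : Q, Function.Bijective fun x => T.out x q

/-- The map `f_T` on bi-infinite sequences induced by a transducer synchronizing at
level `k`; the letter at position `i` of the image is obtained by processing `x i`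
from the state reached after reading `x (i-k), …, x (i-1)` starting at the basepoint
state `q0` (when `T` is synchronizing at level `k` this is the forced state, and the
map does not depend on the choice of `q0`). -/
def zmap (T : Transducer X Q) (k : ℕ) (q0 : Q) (x : ℤ → X) : ℤ → X :=
  fun i => T.out (x i) (T.stepW ((List.range k).map fun j => x (i - (k : ℤ) + (j : ℤ))) q0)

/-- The composite map on one-sided sequences represented by a word of states,
applied leftmost letter first. -/
def wordMap (T : Transducer X Q) : List Q → (ℕ → X) → ℕ → X
  | [], x => x
  | q :: w, x => T.wordMap w (T.stateMap q x)

/-- A bi-infinite sequence is rational if it is eventually periodic in both directions. -/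
def IsRational (z : ℤ → X) : Prop :=
  ∃ (N p q : ℕ), 0 < p ∧ 0 < q ∧
    (∀ i : ℤ, (N : ℤ) ≤ i → z (i + (p : ℤ)) = z i) ∧
    (∀ i : ℤ, i ≤ -(N : ℤ) → z (i - (q : ℤ)) = z i)

/-- The inverse transducer of an invertible transducer. -/
noncomputable def invT (T : Transducer X Q) (hX : Nonempty X) : Transducer X Q where
  step := fun y q => T.step (@Function.invFun X X hX (fun x => T.out x q) y) q
  out := fun y q => @Function.invFun X X hX (fun x => T.out x q) y

/-- The product transducer `A*B`. -/
def prodT (T : Transducer X Q) (S : Transducer X R) : Transducer X (Q × R) where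
  step := fun x pq => (T.step x pq.1, S.step (T.out x pq.1) pq.2)
  out := fun x pq => S.out (T.out x pq.1) pq.2

/-- The `m`-fold power `A^m`, with state set `Q^m`. -/
def powT (T : Transducer X Q) : (m : ℕ) → Transducer X (Fin m → Q)
  | 0 => { step := fun _ u => u, out := fun x _ => x }
  | m + 1 =>
    { step := fun x u =>
        Fin.cons (T.step x (u 0)) ((T.powT m).step (T.out x (u 0)) fun i => u i.succ)
      out := fun x u => (T.powT m).out (T.out x (u 0)) fun i => u i.succ }

/-- The restriction of a transducer to its core. -/
def coreT (T : Transducer X Q) : Transducer X {q : Q // T.InCore q} where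
  step := fun x q =>
    ⟨T.step x q.1, by
      obtain ⟨Γ, hΓ, h⟩ := q.2
      exact ⟨Γ ++ [x], by simp, fun p => by rw [T.stepW_append, h p]; rfl⟩⟩
  out := fun x q => T.out x q.1

/-- `Γ_l^P`: the word obtained by passing `Γ` successively through the states in `P`. -/
def iterW (T : Transducer X Q) : List Q → List X → List X
  | [], Γ => Γ
  | p :: P, Γ => T.iterW P (T.outW Γ p)

/-- The list of states `out_i^P` reached when passing `Γ` successively through `P`. -/
def iterOuts (T : Transducer X Q) : List Q → List X → List Q
  | [], _ => []
  | p :: P, Γ => T.stepW Γ p :: T.iterOuts P (T.outW Γ p)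

/-- `((t :: Tt), (p :: Tp), Γ)` is a split (forced states computed from the
basepoint state `q0`). -/
def SplitCond (T : Transducer X Q) (q0 : Q) (t p : Q) (Tt Tp : List Q) (Γ : List X) : Prop :=
  Tt.length = Tp.length ∧
  T.iterOuts (t :: Tt) Γ = T.iterOuts (p :: Tp) Γ ∧
  (∀ i : ℕ, 1 ≤ i → i < (t :: Tt).length →
    T.stepW (T.iterW ((t :: Tt).take i) Γ) q0 = T.stepW (T.iterW ((p :: Tp).take i) Γ) q0) ∧
  T.stepW (T.iterW (t :: Tt) Γ) q0 ≠ T.stepW (T.iterW (p :: Tp) Γ) q0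

/-- The bottom of the split `((t :: Tt), (p :: Tp), Γ)` depends only on its top. -/
def DependsOnTop (T : Transducer X Q) (q0 : Q) (t p : Q) (Tt Tp : List Q) (Γ : List X) : Prop :=
  ∀ U U' : List Q, U.length = Tt.length → U'.length = Tp.length →
    T.iterOuts (t :: U) Γ = T.iterOuts (t :: Tt) Γ ∧
    T.iterOuts (p :: U') Γ = T.iterOuts (p :: Tp) Γ ∧
    T.stepW (T.iterW (t :: U) Γ) q0 = T.stepW (T.iterW (t :: Tt) Γ) q0 ∧
    T.stepW (T.iterW (p :: U') Γ) q0 = T.stepW (T.iterW (p :: Tp) Γ) q0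

/-- The edge relation of the graph of bad pairs `G_r(T)` (on unordered pairs of
states, modelled as subsets of `Q`). -/
def BadEdge (T : Transducer X Q) (q0 : Q) (r : ℕ) (v w : Set Q) : Prop :=
  ∃ (t p : Q) (Tt Tp : List Q) (Γ : List X), Γ.length = r ∧
    T.SplitCond q0 t p Tt Tp Γ ∧ T.DependsOnTop q0 t p Tt Tp Γ ∧
    v = {t, p} ∧
    w = {T.stepW (T.iterW (t :: Tt) Γ) q0, T.stepW (T.iterW (p :: Tp) Γ) q0}

/-- The `r` splitting length of `T`, as an extended natural number (`⊤` if no split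
at level `r` exists). -/
noncomputable def splittingLength (T : Transducer X Q) (q0 : Q) (r : ℕ) : ℕ∞ :=
  sInf {L : ℕ∞ | ∃ (t p : Q) (Tt Tp : List Q) (Γ : List X),
    Γ.length = r ∧ L = ((Tt.length + 1 : ℕ) : ℕ∞) ∧ T.SplitCond q0 t p Tt Tp Γ}

/-- The `i`-th rotation of a word. -/
def rotWord (i : ℕ) (Γ : List X) : List X :=
  Γ.drop (Γ.length - i) ++ Γ.take (Γ.length - i)

/-- A nonempty word is prime if it is not a proper power of a shorter word. -/
def IsPrimeWord (Γ : List X) : Prop :=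
  Γ ≠ [] ∧ ∀ (δ : List X) (m : ℕ), 2 ≤ m → Γ ≠ (List.replicate m δ).flatten

/-- The length of the orbit of `Γ` under `f`. -/
noncomputable def orbitLen (f : List X → List X) (Γ : List X) : ℕ :=
  (Set.range fun m : ℕ => f^[m] Γ).ncard

/-- The minimal `s ≥ 1` such that `f^[s] Γ` is a rotation of `Γ`
(for words of length `k`). -/
noncomputable def sigmaIdx (f : List X → List X) (k : ℕ) (Γ : List X) : ℕ :=
  sInf {s : ℕ | 1 ≤ s ∧ ∃ i < k, f^[s] Γ = rotWord i Γ}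

/-- The rotation index attained at the minimal exponent `sigmaIdx`. -/
noncomputable def rhoIdx (f : List X → List X) (k : ℕ) (Γ : List X) : ℕ :=
  sInf {i : ℕ | i < k ∧ f^[sigmaIdx f k Γ] Γ = rotWord i Γ}

end Transducer

namespace Transducer

variable {X Q : Type*}

/-! ### Sections of the induced maps -/

/-- The infinite sequence `Γ x` obtained by writing the finite word `Γ` in front of `x`. -/
def prepend : List X → (ℕ → X) → ℕ → X
  | [], x => x
  | a :: Γ, x => fun i => Nat.casesOn i a (prepend Γ x)

theorem prepend_inj {Γ Δ : List X} {x y : ℕ → X} (hlen : Γ.length = Δ.length)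
    (h : prepend Γ x = prepend Δ y) : Γ = Δ ∧ x = y := by
  induction Γ generalizing Δ with
  | nil =>
    cases Δ with
    | nil => exact ⟨rfl, h⟩
    | cons b Δ => simp at hlen
  | cons a Γ ih =>
    cases Δ with
    | nil => simp at hlen
    | cons b Δ =>
      have h0 : a = b := congrFun h 0
      have h1 : prepend Γ x = prepend Δ y := funext fun i => congrFun h (i + 1)
      obtain ⟨e, hx⟩ := ih (by simpa using hlen) h1
      exact ⟨by rw [h0, e], hx⟩

theorem stateMap_prepend (T : Transducer X Q) (Γ : List X) (q : Q) (x : ℕ → X) :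
    T.stateMap q (prepend Γ x) = prepend (T.outW Γ q) (T.stateMap (T.stepW Γ q) x) := by
  induction Γ generalizing q with
  | nil => rfl
  | cons a Γ ih =>
    funext i
    cases i with
    | zero => rfl
    | succ i =>
      have h := congrFun (ih (T.step a q)) i
      simp only [outW, stepW, prepend]
      rw [← h]
      simp only [stateMap, List.range_succ_eq_map, List.map_cons, List.map_map, stepW]
      rfl

theorem wordMap_prepend (T : Transducer X Q) (w : List Q) (Γ : List X) (x : ℕ → X) :
    T.wordMap w (prepend Γ x) = prepend (T.iterW w Γ) (T.wordMap (T.iterOuts w Γ) x) := by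
  induction w generalizing Γ x with
  | nil => rfl
  | cons q w ih => simp only [wordMap, iterW, iterOuts, stateMap_prepend, ih]

theorem length_outW (T : Transducer X Q) (Γ : List X) (q : Q) :
    (T.outW Γ q).length = Γ.length := by
  induction Γ generalizing q with
  | nil => rfl
  | cons a Γ ih => simp [outW, ih]

theorem length_iterW (T : Transducer X Q) (w : List Q) (Γ : List X) :
    (T.iterW w Γ).length = Γ.length := by
  induction w generalizing Γ with
  | nil => rfl
  | cons q w ih => simp [iterW, ih, length_outW]

theorem length_iterOuts (T : Transducer X Q) (w : List Q) (Γ : List X) :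
    (T.iterOuts w Γ).length = w.length := by
  induction w generalizing Γ with
  | nil => rfl
  | cons q w ih => simp [iterOuts, ih]

theorem iterOuts_append (T : Transducer X Q) (u v : List Q) (Γ : List X) :
    T.iterOuts (u ++ v) Γ = T.iterOuts u Γ ++ T.iterOuts v (T.iterW u Γ) := by
  induction u generalizing Γ with
  | nil => rfl
  | cons q u ih => simp [iterOuts, iterW, ih]

theorem wordMap_append (T : Transducer X Q) (u v : List Q) :
    T.wordMap (u ++ v) = T.wordMap v ∘ T.wordMap u := by
  induction u with
  | nil => rfl
  | cons q u ih =>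
    funext x
    exact congrFun ih (T.stateMap q x)

theorem AllHomeo.wordMap_surjective {T : Transducer X Q} (h : T.AllHomeo) (w : List Q) :
    Function.Surjective (T.wordMap w) := by
  induction w with
  | nil => exact Function.surjective_id
  | cons q w ih => exact ih.comp (h q).2

theorem AllHomeo.wordMap_append_cancel {T : Transducer X Q} (h : T.AllHomeo) {u v v' : List Q}
    (e : T.wordMap (u ++ v) = T.wordMap (u ++ v')) : T.wordMap v = T.wordMap v' := by
  rw [wordMap_append, wordMap_append] at e
  exact (h.wordMap_surjective u).injective_comp_right e

theorem Synchronizing.stepW_eq {T : Transducer X Q} {k : ℕ} (h : T.Synchronizing k) {Γ : List X}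
    (hΓ : k ≤ Γ.length) (p q : Q) : T.stepW Γ p = T.stepW Γ q := by
  rw [← List.take_append_drop (Γ.length - k) Γ, stepW_append, stepW_append]
  exact h _ (by simp; omega) _ _

/-! ### Descent along the graph of bad pairs -/

/-- The vertex `v` of the graph of bad pairs is joined by a directed path, possibly of length `0`,
to a vertex on a circuit. -/
def LeadsToCircuit (T : Transducer X Q) (q0 : Q) (r : ℕ) (v : Set Q) : Prop :=
  ∃ w : Set Q, Relation.ReflTransGen (T.BadEdge q0 r) v w ∧ Relation.TransGen (T.BadEdge q0 r) w w

theorem LeadsToCircuit.exists_edge {T : Transducer X Q} {q0 : Q} {r : ℕ} {v : Set Q}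
    (h : T.LeadsToCircuit q0 r v) : ∃ v', T.BadEdge q0 r v v' ∧ T.LeadsToCircuit q0 r v' := by
  obtain ⟨w, hvw, hww⟩ := h
  obtain ⟨v', hv, hv'⟩ := Relation.TransGen.head'_iff.1 (Relation.TransGen.trans_right hvw hww)
  exact ⟨v', hv, w, hv', hww⟩

/-- An edge out of `{t, p}` in terms of ordered pairs: `l + 1` is the length of the split, and `O`
is the word of states that every word of length `l + 1` starting with `t` or `p` turns into on
reading `Γ`. -/
theorem BadEdge.exists_data {T : Transducer X Q} {q0 : Q} {r : ℕ} {t p : Q} {v : Set Q}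
    (h : T.BadEdge q0 r {t, p} v) :
    ∃ (l : ℕ) (Γ : List X) (O : List Q) (a b : Q), Γ.length = r ∧ a ≠ b ∧ v = {a, b} ∧
      (∀ U : List Q, U.length = l →
        T.iterOuts (t :: U) Γ = O ∧ T.stepW (T.iterW (t :: U) Γ) q0 = a) ∧
      (∀ U : List Q, U.length = l →
        T.iterOuts (p :: U) Γ = O ∧ T.stepW (T.iterW (p :: U) Γ) q0 = b) := by
  obtain ⟨t', p', Tt, Tp, Γ, hΓ, ⟨hlen, houts, -, hne⟩, hdep, htp, rfl⟩ := h
  have ht : ∀ U : List Q, U.length = Tt.length →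
      T.iterOuts (t' :: U) Γ = T.iterOuts (t' :: Tt) Γ ∧
        T.stepW (T.iterW (t' :: U) Γ) q0 = T.stepW (T.iterW (t' :: Tt) Γ) q0 := fun U hU =>
    ⟨(hdep U Tp hU rfl).1, (hdep U Tp hU rfl).2.2.1⟩
  have hp : ∀ U : List Q, U.length = Tt.length →
      T.iterOuts (p' :: U) Γ = T.iterOuts (t' :: Tt) Γ ∧
        T.stepW (T.iterW (p' :: U) Γ) q0 = T.stepW (T.iterW (p' :: Tp) Γ) q0 := fun U hU =>
    ⟨(hdep Tt U rfl (hU.trans hlen)).2.1.trans houts.symm,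
      (hdep Tt U rfl (hU.trans hlen)).2.2.2⟩
  rcases Set.pair_eq_pair_iff.1 htp with ⟨rfl, rfl⟩ | ⟨rfl, rfl⟩
  · exact ⟨_, Γ, _, _, _, hΓ, hne, rfl, ht, hp⟩
  · exact ⟨_, Γ, _, _, _, hΓ, hne.symm, Set.pair_comm _ _, hp, ht⟩

/-- Words of equal length whose first letters form a vertex leading to a circuit induce distinct
maps, whatever their other letters are. -/
theorem wordMap_ne_of_leadsToCircuit [Nonempty X] {T : Transducer X Q} {k r : ℕ} {q0 : Q}
    (hsync : T.Synchronizing k) (hhomeo : T.AllHomeo) (hkr : k ≤ r) {t p : Q} {U V : List Q}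
    (hUV : U.length = V.length) (h : T.LeadsToCircuit q0 r {t, p}) :
    T.wordMap (t :: U) ≠ T.wordMap (p :: V) := by
  induction hm : U.length using Nat.strong_induction_on generalizing t p U V with
  | _ m ih =>
  subst hm
  intro heq
  obtain ⟨v, hedge, hv⟩ := h.exists_edge
  obtain ⟨l, Γ, O, a, b, hΓ, hab, rfl, ht, hp⟩ := hedge.exists_data
  rcases le_or_gt U.length l with hle | hlt
  · -- Padding on the right keeps the maps equal.
    have hpad : T.wordMap (t :: (U ++ List.replicate (l - U.length) t)) =
        T.wordMap (p :: (V ++ List.replicate (l - U.length) t)) := by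
      rw [← List.cons_append, ← List.cons_append, wordMap_append, wordMap_append, heq]
    obtain ⟨c⟩ := ‹Nonempty X›
    have hx := congrFun hpad (prepend Γ fun _ => c)
    rw [wordMap_prepend, wordMap_prepend] at hx
    have hW := (prepend_inj (by simp only [length_iterW]) hx).1
    apply hab
    rw [← (ht (U ++ List.replicate (l - U.length) t) (by simp; omega)).2,
      ← (hp (V ++ List.replicate (l - U.length) t) (by simp; omega)).2, hW]
  · obtain ⟨U₁, c, U₂, rfl, hU₁⟩ : ∃ U₁ c U₂, U = U₁ ++ c :: U₂ ∧ U₁.length = l :=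
      ⟨U.take l, U[l], U.drop (l + 1), by simp, by simp; omega⟩
    obtain ⟨V₁, d, V₂, rfl, hV₁⟩ : ∃ V₁ d V₂, V = V₁ ++ d :: V₂ ∧ V₁.length = l :=
      ⟨V.take l, V[l], V.drop (l + 1), by simp, by simp; omega⟩
    -- As `k ≤ r`, the states `c` and `d` turn into the forced states `a` and `b`.
    have hsec : ∀ (s e f : Q) (W R : List Q), T.iterOuts (s :: W) Γ = O →
        T.stepW (T.iterW (s :: W) Γ) q0 = f →
        T.iterOuts (s :: (W ++ e :: R)) Γ =
          O ++ f :: T.iterOuts R (T.outW (T.iterW (s :: W) Γ) e) := by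
      intro s e f W R hO hf
      rw [← List.cons_append, iterOuts_append, hO, ← hf,
        hsync.stepW_eq (by rw [length_iterW]; omega) q0 e, iterOuts]
    have hcancel : T.wordMap (T.iterOuts (t :: (U₁ ++ c :: U₂)) Γ) =
        T.wordMap (T.iterOuts (p :: (V₁ ++ d :: V₂)) Γ) := by
      funext x
      have hx := congrFun heq (prepend Γ x)
      rw [wordMap_prepend, wordMap_prepend] at hx
      exact (prepend_inj (by simp only [length_iterW]) hx).2
    rw [hsec t c a U₁ U₂ (ht _ hU₁).1 (ht _ hU₁).2,
      hsec p d b V₁ V₂ (hp _ hV₁).1 (hp _ hV₁).2] at hcancel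
    have hlen : U₂.length = V₂.length := by
      simp only [List.length_append, List.length_cons] at hUV
      omega
    refine ih U₂.length ?_ (t := a) (p := b) ?_ hv ?_ (hhomeo.wordMap_append_cancel hcancel)
    · simp only [List.length_append, List.length_cons]
      omega
    · simp only [length_iterOuts, hlen]
    · rw [length_iterOuts]

end Transducer

/-- Let `A` be a core synchronous transducer on `X_n`, synchronizing at
level `k`, invertible, with every state a homeomorphism state, and minimal.  Let
`j ≥ k` and let `S ⊆ Q_A` with `|S| ≥ 2` be such that every two-element subset of `S`
is a vertex of `G_j(A)` and from every such vertex there is a directed path (possibly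
of length `0`) to a vertex lying on a circuit.  Then `w ↦ A_w` is injective on nonempty
words over `S`, i.e. `{A_q : q ∈ S}` generates a free subsemigroup of rank `|S|`. -/
theorem free_subsemigroup_of_rank_card
    (n : ℕ) (hn : 2 ≤ n) {Q : Type*} [Fintype Q]
    (A : Transducer (Fin n) Q) (k j : ℕ) (q0 : Q)
    (hcore : A.IsCore) (hsync : A.Synchronizing k)
    (hinv : A.Invertible) (hhomeo : A.AllHomeo)
    (hmin : ∀ q q' : Q, A.stateMap q = A.stateMap q' → q = q')
    (hkj : k ≤ j)
    (S : Finset Q) (hS : 2 ≤ S.card)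
    (hvert : ∀ p ∈ S, ∀ q ∈ S, p ≠ q → ∃ w : Set Q, A.BadEdge q0 j {p, q} w)
    (hpath : ∀ p ∈ S, ∀ q ∈ S, p ≠ q → ∃ w : Set Q,
      Relation.ReflTransGen (A.BadEdge q0 j) {p, q} w ∧
        Relation.TransGen (A.BadEdge q0 j) w w) :
    ∀ w w' : List Q, w ≠ [] → w' ≠ [] →
      (∀ a ∈ w, a ∈ S) → (∀ a ∈ w', a ∈ S) →
      A.wordMap w = A.wordMap w' → w = w' := by
  have : Nonempty (Fin n) := ⟨⟨0, by omega⟩⟩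
  have key : ∀ (t p : Q) (U V : List Q), t ∈ S → p ∈ S → t ≠ p → U.length = V.length →
      A.wordMap (t :: U) ≠ A.wordMap (p :: V) := fun t p U V ht hp htp hUV =>
    Transducer.wordMap_ne_of_leadsToCircuit hsync hhomeo hkj hUV (hpath t ht p hp htp)
  have hid : ∀ (a : Q) (v : List Q), a ∈ S → A.wordMap (a :: v) ≠ A.wordMap [] := by
    intro a v ha h
    obtain ⟨q, hq, hqa⟩ := Finset.exists_mem_ne (by omega : 1 < S.card) a
    refine key q a (a :: v) (v ++ [q]) hq ha hqa (by simp) ?_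
    change A.wordMap ([q] ++ (a :: v)) = A.wordMap ((a :: v) ++ [q])
    rw [A.wordMap_append, A.wordMap_append, h]
    rfl
  intro w w' hne hne' hw hw' h
  clear hne hne'
  induction w generalizing w' with
  | nil =>
    cases w' with
    | nil => rfl
    | cons b v' => exact absurd h.symm (hid b v' (hw' b (by simp)))
  | cons a v ih =>
    cases w' with
    | nil => exact absurd h (hid a v (hw a (by simp)))
    | cons b v' =>
      have ha := hw a (by simp)
      have hb := hw' b (by simp)
      by_cases hab : a = b
      · subst hab
        have hc : A.wordMap v = A.wordMap v' := hhomeo.wordMap_append_cancel (u := [a]) h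
        rw [ih v' (fun x hx => hw x (by simp [hx])) (fun x hx => hw' x (by simp [hx])) hc]
      · refine absurd ?_ (key a b (v ++ b :: v') (v' ++ a :: v) ha hb hab (by simp; omega))
        rw [← List.cons_append, ← List.cons_append, A.wordMap_append, A.wordMap_append, h]
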